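/- arXiv:math/0606306 — 2 statements merged into one kernel-verified Lean document; each statement's English description precedes it below -/
import Mathlib

section
/- Let D ⊆ ℂ be a bounded domain, let F be holomorphic on D, and let u : cl(D) → ℝ be continuous with u(z) = Re F(z) for all z ∈ D. If the set of values u(∂D) is finite, then F is constant on D. -/
open Complex Set

/-!
Suppose `F` is not constant, so that `F(D)` is open. If the level `c` of `u` avoids `∂D`, then
`{u = c}` is a compact subset of `D`, so its image under `F`, the part of `F(D)` on the line
`Re w = c`, is compact. It is also open in that line, hence empty. Therefore `u(D) ⊆ u(∂D)`, and
`u(D) = Re F(D)` is a nonempty open set of reals.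
-/

theorem notMem_re_image_of_isCompact_inter_preimage {V : Set ℂ} {c : ℝ} (hV : IsOpen V)
    (hc : IsCompact (V ∩ re ⁻¹' {c})) : c ∉ re '' V := by
  rintro ⟨w, hwV, rfl⟩
  let T : Set ℝ := {t | (⟨w.re, t⟩ : ℂ) ∈ V}
  have hT_open : IsOpen T :=
    hV.preimage (equivRealProdCLM.symm.continuous.comp (Continuous.prodMk_right w.re))
  have hT_eq : T = im '' (V ∩ re ⁻¹' {w.re}) := by
    ext t
    constructor
    · exact fun ht ↦ ⟨⟨w.re, t⟩, ⟨ht, rfl⟩, rfl⟩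
    · rintro ⟨z, ⟨hzV, hz : z.re = w.re⟩, rfl⟩
      simpa only [T, mem_ofPred_eq, ← hz] using hzV
  have hT_compact : IsCompact T := hT_eq ▸ hc.image continuous_im
  have hT_univ : T = univ := IsClopen.eq_univ ⟨hT_compact.isClosed, hT_open⟩ ⟨w.im, hwV⟩
  exact noncompact_univ ℝ (hT_univ ▸ hT_compact)

section Frontier

variable {X : Type*} [TopologicalSpace X] {D : Set X}

theorem closure_inter_preimage_eq_of_notMem_image_frontier {Y : Type*} {u : X → Y} {c : Y}
    (hc : c ∉ u '' frontier D) : closure D ∩ u ⁻¹' {c} = D ∩ u ⁻¹' {c} := by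
  refine Subset.antisymm ?_ (inter_subset_inter_left _ subset_closure)
  rintro z ⟨hz, hzc⟩
  have hz_frontier : z ∉ frontier D := fun h ↦ hc ⟨z, h, hzc⟩
  have hz_interior : z ∈ interior D := closure_sdiff_frontier D ▸ ⟨hz, hz_frontier⟩
  exact ⟨interior_subset hz_interior, hzc⟩

theorem image_subset_image_frontier_of_isOpen_image {F : X → ℂ} {u : X → ℝ}
    (hD_compact : IsCompact (closure D)) (hF : ContinuousOn F D) (hF_open : IsOpen (F '' D))
    (hu : ContinuousOn u (closure D)) (huF : ∀ z ∈ D, u z = (F z).re) :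
    u '' D ⊆ u '' frontier D := by
  rintro c ⟨z, hz, hzc⟩
  by_contra hc
  have hK : IsCompact (D ∩ u ⁻¹' {c}) := by
    rw [← closure_inter_preimage_eq_of_notMem_image_frontier hc]
    exact hD_compact.of_isClosed_subset
      (hu.preimage_isClosed_of_isClosed isClosed_closure isClosed_singleton) inter_subset_left
  have hFK : F '' (D ∩ u ⁻¹' {c}) = F '' D ∩ re ⁻¹' {c} := by
    rw [← image_inter_preimage]
    congr 1
    ext w
    exact and_congr_right fun hw ↦ by simp only [mem_preimage, huF w hw]
  have hFK_compact : IsCompact (F '' D ∩ re ⁻¹' {c}) :=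
    hFK ▸ hK.image_of_continuousOn (hF.mono inter_subset_left)
  exact notMem_re_image_of_isCompact_inter_preimage hF_open hFK_compact
    ⟨F z, mem_image_of_mem F hz, huF z hz ▸ hzc⟩

end Frontier

theorem holomorphic_const_of_finite_boundary_real_values_general
    {E : Type*} [NormedAddCommGroup E] [NormedSpace ℂ E]
    {D : Set E} (hD_open : IsOpen D) (hD_conn : IsPreconnected D)
    (hD_compact : IsCompact (closure D))
    {F : E → ℂ} (hF : AnalyticOnNhd ℂ F D)
    {u : E → ℝ} (hu : ContinuousOn u (closure D)) (huF : ∀ z ∈ D, u z = (F z).re)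
    (hu_frontier : interior (u '' frontier D) = ∅) :
    ∀ z ∈ D, ∀ w ∈ D, F z = F w := by
  intro z hz w hw
  obtain ⟨a, ha⟩ | hF_open := hF.is_constant_or_isOpen hD_conn
  · rw [ha z hz, ha w hw]
  have hFD : IsOpen (F '' D) := hF_open D Subset.rfl hD_open
  have huD : IsOpen (u '' D) := by
    rw [image_congr huF, ← image_image re F]
    exact isOpenMap_re _ hFD
  have hsub : u '' D ⊆ interior (u '' frontier D) := interior_maximal
    (image_subset_image_frontier_of_isOpen_image hD_compact hF.continuousOn hFD hu huF) huD
  exact (notMem_empty _ (hu_frontier ▸ hsub (mem_image_of_mem u hz))).elim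

/-- If `F` is holomorphic on a bounded domain `D`, `u` is continuous on `cl(D)` and agrees
with `Re F` on `D`, and `u` takes only finitely many values on `∂D`, then `F` is constant
on `D`. -/
theorem holomorphic_const_of_finite_boundary_real_values
    (D : Set ℂ) (hD_open : IsOpen D) (hD_conn : IsConnected D)
    (hD_bdd : Bornology.IsBounded D)
    (F : ℂ → ℂ) (hF : DifferentiableOn ℂ F D)
    (u : ℂ → ℝ) (hu_cont : ContinuousOn u (closure D))
    (huF : ∀ z ∈ D, u z = (F z).re)
    (hfin : (u '' frontier D).Finite) :
    ∀ z ∈ D, ∀ w ∈ D, F z = F w :=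
  holomorphic_const_of_finite_boundary_real_values_general hD_open hD_conn.isPreconnected
    hD_bdd.isCompact_closure (hF.analyticOnNhd hD_open) hu_cont huF
    (interior_eq_empty_iff_dense_compl.2 (hfin.countable.dense_compl ℝ))
end

section
/- Let D ⊆ ℂ be a bounded simply connected domain. Assume D is a Dirichlet domain: for every continuous φ : ∂D → ℝ there is a continuous function on cl(D), harmonic on D, agreeing with φ on ∂D. Let f : ∂D → ℂ be continuous and let u, v : cl(D) → ℂ be continuous on cl(D), harmonic on D, with u(z) = f(z) and v(z) = z·f(z) for z ∈ ∂D. Suppose f does not extend holomorphically through D. Then there exist a point a ∈ D, a real number γ, a real number α > 0, and holomorphic functions F and G on D such that Re( e^{iγ}(v(z) − a·u(z)) − (z−a)F(z) − (z−a)G(z) ) = α for all z ∈ D. -/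
open Complex Set

/-- A real-valued function is harmonic on a set `s` (intended: `s` open) if it is C²
there and its Laplacian vanishes at every point of `s`. -/
def HarmonicOnR (u : ℂ → ℝ) (s : Set ℂ) : Prop :=
  ContDiffOn ℝ 2 u s ∧
    ∀ z ∈ s,
      iteratedFDeriv ℝ 2 u z ![1, 1] + iteratedFDeriv ℝ 2 u z ![Complex.I, Complex.I] = 0

/-- A complex-valued function is harmonic on a set if its real and imaginary parts are. -/
def HarmonicOnC (u : ℂ → ℂ) (s : Set ℂ) : Prop :=
  HarmonicOnR (fun z => (u z).re) s ∧ HarmonicOnR (fun z => (u z).im) s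

/-!
The function `v - a u` is harmonic for every constant `a`, so, `D` being simply connected, every
rotation of it has real part `Re H` with `H` holomorphic. Subtracting `(z - a) F(z) = H(z) - H(a)`
leaves the constant `Re H(a)`, which equals `|v(a) - a u(a)|` when the rotation is by minus the
argument of `v(a) - a u(a)`. It remains to find `a` at which this number is nonzero. If there were
none, then `v = z u` on `D`; applying `∂ = ∂/∂z`, which maps harmonic functions to holomorphic
ones, gives `∂v = u + z ∂u`, so `u = ∂v - z ∂u` would be a holomorphic extension of `f`.

The holomorphic `H` is obtained from its local versions on discs. On overlaps their imaginary
parts differ by locally constant functions, which are the transition functions of a covering of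
`D`; a section of this covering glues them.
-/

open Filter Metric Topology InnerProductSpace

section Gluing

variable {X ι A : Type*} [TopologicalSpace X] [AddGroup A]

/-- The bundle over `X` with discrete fibre `A` whose transition functions are translations by the
locally constant differences `P i - P j`. A section `σ`, read in the chart `i` as `σ i`, is the
same as a function `F` with `σ i = F - P i` on each `U i`. -/
noncomputable def translationBundleCore [TopologicalSpace A] [DiscreteTopology A]
    (U : ι → Set X) (P : ι → X → A) (hU : ∀ i, IsOpen (U i)) (hcover : ∀ x, ∃ i, x ∈ U i)
    (hP : ∀ i j, ∀ x ∈ U i ∩ U j, ∀ᶠ y in 𝓝 x, P i y - P j y = P i x - P j x) :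
    FiberBundleCore ι X A where
  baseSet := U
  isOpen_baseSet := hU
  indexAt x := (hcover x).choose
  mem_baseSet_at x := (hcover x).choose_spec
  coordChange i j x c := c + (P i x - P j x)
  coordChange_self i x _ c := by rw [sub_self, add_zero]
  continuousOn_coordChange i j := by
    have hcont : ContinuousOn (fun x ↦ P i x - P j x) (U i ∩ U j) := fun x hx ↦
      (continuousAt_const.congr (EventuallyEq.symm (hP i j x hx))).continuousWithinAt
    exact continuousOn_snd.add (hcont.comp continuousOn_fst fun _ hp ↦ hp.1)
  coordChange_comp i j k x _ c := by rw [add_assoc, sub_add_sub_cancel]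

theorem exists_forall_eventually_sub_eq [SimplyConnectedSpace X] [LocallyPathConnectedSpace X]
    {U : ι → Set X} {P : ι → X → A} (hU : ∀ i, IsOpen (U i)) (hcover : ∀ x, ∃ i, x ∈ U i)
    (hP : ∀ i j, ∀ x ∈ U i ∩ U j, ∀ᶠ y in 𝓝 x, P i y - P j y = P i x - P j x) :
    ∃ F : X → A, ∀ i, ∀ x ∈ U i, ∀ᶠ y in 𝓝 x, F y - P i y = F x - P i x := by
  let _ : TopologicalSpace A := ⊥
  have : DiscreteTopology A := ⟨rfl⟩
  let Z := translationBundleCore U P hU hcover hP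
  have hcov : IsCoveringMap (Bundle.TotalSpace.proj : Bundle.TotalSpace A Z.Fiber → X) :=
    FiberBundle.isCoveringMap
  obtain ⟨x₀⟩ : Nonempty X := inferInstance
  obtain ⟨s, ⟨-, hs⟩, -⟩ := hcov.existsUnique_continuousMap_lifts (ContinuousMap.id X)
    (a₀ := x₀) (e₀ := ⟨x₀, (0 : A)⟩) rfl
  have hproj : ∀ x, (s x).proj = x := congrFun hs
  let σ : X → A := fun x ↦ (s x).snd
  refine ⟨fun x ↦ σ x + P (Z.indexAt x) x, fun i x hx ↦ ?_⟩
  have hchart : ∀ y, (Z.localTriv i (s y)).2 = σ y + P (Z.indexAt y) y - P i y := fun y ↦ by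
    rw [Z.localTriv_apply, add_sub_assoc]
    change σ y + (P (Z.indexAt (s y).proj) (s y).proj - P i (s y).proj) = _
    rw [hproj]
  have hcont : ContinuousAt (fun y ↦ (Z.localTriv i (s y)).2) x := by
    refine continuousAt_snd.comp
      (ContinuousAt.comp (g := Z.localTriv i) ?_ s.continuous.continuousAt)
    refine (Z.localTriv i).continuousAt ?_
    rwa [Z.mem_localTriv_source, hproj]
  simpa only [hchart, mem_singleton_iff] using
    hcont.eventually_mem ((isOpen_discrete {_}).mem_nhds rfl)

theorem exists_forall_eventually_sub_eq_of_isSimplyConnected [LocallyPathConnectedSpace X]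
    {S : Set X} (hS : IsOpen S) (hSsc : IsSimplyConnected S) {U : ι → Set X} {P : ι → X → A}
    (hU : ∀ i, IsOpen (U i)) (hcover : ∀ x ∈ S, ∃ i, x ∈ U i)
    (hP : ∀ i j, ∀ x ∈ S, x ∈ U i ∩ U j → ∀ᶠ y in 𝓝 x, P i y - P j y = P i x - P j x) :
    ∃ F : X → A, ∀ i, ∀ x ∈ S, x ∈ U i → ∀ᶠ y in 𝓝 x, F y - P i y = F x - P i x := by
  have := hSsc.simplyConnectedSpace
  have := hS.locallyPathConnectedSpace
  obtain ⟨F, hF⟩ := exists_forall_eventually_sub_eq (U := fun i ↦ ((↑) : S → X) ⁻¹' U i)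
    (P := fun i x ↦ P i x) (fun i ↦ (hU i).preimage continuous_subtype_val)
    (fun x ↦ hcover x x.2)
    (fun i j x hx ↦ continuousAt_subtype_val.eventually (hP i j x x.2 hx))
  have hext : ∀ x : S, Function.extend Subtype.val F 0 x = F x :=
    Subtype.val_injective.extend_apply F 0
  refine ⟨Function.extend Subtype.val F 0, fun i x hxS hxU ↦ ?_⟩
  lift x to S using hxS
  rw [← map_nhds_subtype_coe_eq_nhds x.2 (hS.mem_nhds x.2), eventually_map]
  simpa only [hext] using hF i x hxU

end Gluing

section Wirtinger

variable {u v : ℂ → ℂ} {z : ℂ}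

/-- The Wirtinger derivative `∂u/∂z = (∂u/∂x - i ∂u/∂y) / 2`, with junk value `0` where `u` is not
real-differentiable. -/
noncomputable def wirtingerDeriv (u : ℂ → ℂ) (z : ℂ) : ℂ :=
  (fderiv ℝ u z 1 - I * fderiv ℝ u z I) / 2

theorem wirtingerDeriv_fun_id : wirtingerDeriv (fun w ↦ w) z = 1 := by
  simp only [wirtingerDeriv, fderiv_fun_id, ContinuousLinearMap.id_apply, I_mul_I]
  norm_num

theorem wirtingerDeriv_fun_mul (hu : DifferentiableAt ℝ u z) (hv : DifferentiableAt ℝ v z) :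
    wirtingerDeriv (fun w ↦ u w * v w) z
      = u z * wirtingerDeriv v z + wirtingerDeriv u z * v z := by
  simp only [wirtingerDeriv, fderiv_fun_mul hu hv, add_apply, smul_apply, smul_eq_mul]
  ring

theorem wirtingerDeriv_eq_re_add_im (hu : DifferentiableAt ℝ u z) :
    wirtingerDeriv u z =
      ((fderiv ℝ (fun w ↦ (u w).re) z 1 - I * fderiv ℝ (fun w ↦ (u w).re) z I)
        + I * (fderiv ℝ (fun w ↦ (u w).im) z 1 - I * fderiv ℝ (fun w ↦ (u w).im) z I)) / 2 := by
  have hre : fderiv ℝ (fun w ↦ (u w).re) z = reCLM.comp (fderiv ℝ u z) :=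
    (reCLM.hasFDerivAt.comp z hu.hasFDerivAt).fderiv
  have him : fderiv ℝ (fun w ↦ (u w).im) z = imCLM.comp (fderiv ℝ u z) :=
    (imCLM.hasFDerivAt.comp z hu.hasFDerivAt).fderiv
  simp only [hre, him, wirtingerDeriv, ContinuousLinearMap.comp_apply, reCLM_apply, imCLM_apply]
  linear_combination (I * re_add_im (fderiv ℝ u z I) - re_add_im (fderiv ℝ u z 1)) / 2

theorem differentiableAt_wirtingerDeriv (hu : HarmonicAt u z) :
    DifferentiableAt ℂ (wirtingerDeriv u) z := by
  have hre : HarmonicAt (fun w ↦ (u w).re) z := hu.comp_CLM reCLM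
  have him : HarmonicAt (fun w ↦ (u w).im) z := hu.comp_CLM imCLM
  have hsum := ((HarmonicAt.differentiableAt_complex_partial hre).add
    ((HarmonicAt.differentiableAt_complex_partial him).const_mul I)).div_const 2
  refine hsum.congr_of_eventuallyEq ?_
  filter_upwards [hu.eventually] with w hw
  exact wirtingerDeriv_eq_re_add_im (hw.1.differentiableAt two_ne_zero)

theorem differentiableAt_of_harmonicAt_id_mul (hu : HarmonicAt u z)
    (hv : HarmonicAt (fun w ↦ w * u w) z) : DifferentiableAt ℂ u z := by
  have hu_eq : u =ᶠ[𝓝 z]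
      fun w ↦ wirtingerDeriv (fun ζ ↦ ζ * u ζ) w - w * wirtingerDeriv u w := by
    filter_upwards [hu.eventually] with w hw
    rw [wirtingerDeriv_fun_mul differentiableAt_fun_id (hw.1.differentiableAt two_ne_zero),
      wirtingerDeriv_fun_id]
    ring
  exact ((differentiableAt_wirtingerDeriv hv).sub (differentiableAt_fun_id.mul
    (differentiableAt_wirtingerDeriv hu))).congr_of_eventuallyEq hu_eq

end Wirtinger

section RealPart

theorem eventually_im_sub_eq_of_re_eq {H K : ℂ → ℂ} {z : ℂ} (hH : AnalyticAt ℂ H z)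
    (hK : AnalyticAt ℂ K z) (hre : ∀ᶠ w in 𝓝 z, (H w).re = (K w).re) :
    ∀ᶠ w in 𝓝 z, (H w).im - (K w).im = (H z).im - (K z).im := by
  obtain ⟨r, hr, hball⟩ := eventually_nhds_iff_ball.1
    ((hH.eventually_analyticAt.and hK.eventually_analyticAt).and hre)
  obtain ⟨c, hc⟩ := AnalyticOnNhd.eq_const_of_re_eq_const (f := H - K) (c₀ := 0)
    (fun w hw ↦ (hball w hw).1.1.sub (hball w hw).1.2)
    (fun w hw ↦ by rw [Pi.sub_apply, sub_re, (hball w hw).2, sub_self]) isOpen_ball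
    ((convex_ball z r).isConnected ⟨z, mem_ball_self hr⟩)
  have him : ∀ w ∈ ball z r, (H w).im - (K w).im = c.im := fun w hw ↦ by
    rw [← hc w hw, Pi.sub_apply, sub_im]
  filter_upwards [ball_mem_nhds z hr] with w hw
  rw [him w hw, him z (mem_ball_self hr)]

variable {D : Set ℂ}

theorem exists_differentiableOn_re_eq {h : ℂ → ℝ} (hD : IsOpen D) (hDsc : IsSimplyConnected D)
    (hh : HarmonicOnNhd h D) :
    ∃ H : ℂ → ℂ, DifferentiableOn ℂ H D ∧ ∀ z ∈ D, (H z).re = h z := by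
  choose r hr hrD using fun x : D ↦ Metric.isOpen_iff.1 hD x x.2
  choose H hH hHre using fun x : D ↦ (hh.mono (hrD x)).exists_analyticOnNhd_ball_re_eq
  obtain ⟨F, hF⟩ := exists_forall_eventually_sub_eq_of_isSimplyConnected hD hDsc
    (U := fun x : D ↦ ball x (r x)) (P := fun x z ↦ (H x z).im) (fun _ ↦ isOpen_ball)
    (fun z hz ↦ ⟨⟨z, hz⟩, mem_ball_self (hr _)⟩) fun x y z _ ⟨hzx, hzy⟩ ↦ by
      refine eventually_im_sub_eq_of_re_eq (hH x z hzx) (hH y z hzy) ?_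
      filter_upwards [isOpen_ball.mem_nhds hzx, isOpen_ball.mem_nhds hzy] with w hwx hwy
      exact (hHre x hwx).trans (hHre y hwy).symm
  refine ⟨fun z ↦ h z + F z * I, fun z hz ↦ ?_, fun z _ ↦ by simp⟩
  lift z to D using hz
  have hzr : (z : ℂ) ∈ ball (z : ℂ) (r z) := mem_ball_self (hr z)
  have hlocal : ∀ᶠ w in 𝓝 (z : ℂ), h w + F w * I = H z w + (F z - (H z z).im : ℝ) * I := by
    filter_upwards [hF z z z.2 hzr, ball_mem_nhds _ (hr z)] with w hFw hw
    rw [← hFw, ← hHre z hw]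
    apply Complex.ext <;> simp
  exact (((hH z z hzr).differentiableAt.add_const _).congr_of_eventuallyEq
    hlocal).differentiableWithinAt

theorem exp_neg_arg_mul_I_mul_self (w : ℂ) : exp ((-arg w : ℝ) * I) * w = ‖w‖ := by
  nth_rw 2 [← norm_mul_exp_arg_mul_I w]
  rw [mul_left_comm, ← Complex.exp_add, ofReal_neg, neg_mul, neg_add_cancel, Complex.exp_zero,
    mul_one]

theorem exists_re_exp_mul_sub_eq_norm {φ : ℂ → ℂ} (hD : IsOpen D) (hDsc : IsSimplyConnected D)
    (hφ : HarmonicOnNhd φ D) {a : ℂ} (ha : a ∈ D) :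
    ∃ γ : ℝ, ∃ F : ℂ → ℂ, DifferentiableOn ℂ F D ∧
      ∀ z ∈ D, (exp (γ * I) * φ z - (z - a) * F z).re = ‖φ a‖ := by
  let γ : ℝ := -arg (φ a)
  have hre : HarmonicOnNhd (fun z ↦ (exp (γ * I) * φ z).re) D :=
    hφ.comp_CLM (reCLM ∘L ContinuousLinearMap.mul ℝ ℂ (exp (γ * I)))
  obtain ⟨H, hH, hHre⟩ := exists_differentiableOn_re_eq hD hDsc hre
  refine ⟨γ, dslope H a, (differentiableOn_dslope (hD.mem_nhds ha)).2 hH, fun z hz ↦ ?_⟩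
  calc (exp (γ * I) * φ z - (z - a) * dslope H a z).re
      = (exp (γ * I) * φ z - (H z - H a)).re := by rw [← sub_smul_dslope, smul_eq_mul]
    _ = (exp (γ * I) * φ a).re := by simp only [sub_re, hHre z hz, hHre a ha, sub_sub_cancel]
    _ = ‖φ a‖ := by rw [exp_neg_arg_mul_I_mul_self, ofReal_re]

end RealPart

section Correction

variable {D : Set ℂ} {u v : ℂ → ℂ}

theorem HarmonicOnR.harmonicOnNhd {h : ℂ → ℝ} (hh : HarmonicOnR h D) (hD : IsOpen D) :
    HarmonicOnNhd h D := fun z hz ↦ by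
  refine ⟨hh.1.contDiffAt (hD.mem_nhds hz), ?_⟩
  filter_upwards [hD.mem_nhds hz] with w hw
  rw [laplacian_eq_iteratedFDeriv_complexPlane]
  exact hh.2 w hw

theorem HarmonicOnC.harmonicOnNhd (hu : HarmonicOnC u D) (hD : IsOpen D) :
    HarmonicOnNhd u D := by
  have hsum := ((hu.1.harmonicOnNhd hD).comp_CLM ofRealCLM).add
    ((hu.2.harmonicOnNhd hD).comp_CLM (I • ofRealCLM))
  convert hsum using 1
  ext z
  simp [mul_comm I, re_add_im]

theorem simply_connected_correction_general (hD : IsOpen D) (hDsc : IsSimplyConnected D)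
    (hu : HarmonicOnC u D) (hv : HarmonicOnC v D) (hu_nhol : ¬DifferentiableOn ℂ u D) :
    ∃ a ∈ D, ∃ γ : ℝ, ∃ α : ℝ, 0 < α ∧ ∃ F : ℂ → ℂ, DifferentiableOn ℂ F D ∧
      ∀ z ∈ D, (exp (γ * I) * (v z - a * u z) - (z - a) * F z).re = α := by
  have hu := hu.harmonicOnNhd hD
  have hv := hv.harmonicOnNhd hD
  obtain ⟨a, ha, hne⟩ : ∃ a ∈ D, v a - a * u a ≠ 0 := by
    by_contra! hzero
    have huv : EqOn v (fun z ↦ z * u z) D := fun z hz ↦ sub_eq_zero.1 (hzero z hz)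
    refine hu_nhol fun z hz ↦
      (differentiableAt_of_harmonicAt_id_mul (hu z hz) ?_).differentiableWithinAt
    exact (harmonicAt_congr_nhds (huv.eventuallyEq_of_mem (hD.mem_nhds hz))).1 (hv z hz)
  obtain ⟨γ, F, hF, h⟩ := exists_re_exp_mul_sub_eq_norm hD hDsc
    (hv.sub (hu.comp_CLM (ContinuousLinearMap.mul ℝ ℂ a))) ha
  exact ⟨a, ha, γ, _, norm_pos_iff.2 hne, F, hF, h⟩

end Correction

/-- Simply connected case: if `f`, continuous on the boundary of a bounded simply connected
Dirichlet domain `D`, does not extend holomorphically through `D`, and `u`, `v` are the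
harmonic extensions of `f` and `z·f`, then there are `a ∈ D`, `γ ∈ ℝ`, `α > 0` and
holomorphic `F, G` on `D` with
`Re(e^{iγ}(v(z) - a·u(z)) - (z-a)F(z) - (z-a)G(z)) = α` on `D`. -/
theorem simply_connected_correction
    (D : Set ℂ) (hD_open : IsOpen D) (hD_conn : IsConnected D)
    (hD_bdd : Bornology.IsBounded D)
    (hD_sc : SimplyConnectedSpace D)
    (hDirichlet : ∀ φ : ℂ → ℝ, ContinuousOn φ (frontier D) →
      ∃ w : ℂ → ℝ, ContinuousOn w (closure D) ∧ HarmonicOnR w D ∧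
        ∀ z ∈ frontier D, w z = φ z)
    (f : ℂ → ℂ) (hf : ContinuousOn f (frontier D))
    (u v : ℂ → ℂ)
    (hu_cont : ContinuousOn u (closure D)) (hu_harm : HarmonicOnC u D)
    (hu_bd : ∀ z ∈ frontier D, u z = f z)
    (hv_cont : ContinuousOn v (closure D)) (hv_harm : HarmonicOnC v D)
    (hv_bd : ∀ z ∈ frontier D, v z = z * f z)
    (hnoext : ¬ ∃ g : ℂ → ℂ, ContinuousOn g (closure D) ∧ DifferentiableOn ℂ g D ∧
      ∀ z ∈ frontier D, g z = f z) :
    ∃ a ∈ D, ∃ γ : ℝ, ∃ α : ℝ, 0 < α ∧ ∃ F G : ℂ → ℂ,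
      DifferentiableOn ℂ F D ∧ DifferentiableOn ℂ G D ∧
      ∀ z ∈ D,
        (Complex.exp (γ * Complex.I) * (v z - a * u z)
          - (z - a) * F z - (z - a) * G z).re = α := by
  obtain ⟨a, ha, γ, α, hα, F, hF, h⟩ := simply_connected_correction_general hD_open hD_sc
    hu_harm hv_harm fun hu ↦ hnoext ⟨u, hu_cont, hu, hu_bd⟩
  exact ⟨a, ha, γ, α, hα, F, 0, hF, differentiableOn_const 0, fun z hz ↦ by simpa using h z hz⟩
end
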